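/- For every L ∈ ℕ and every ε > 0 there exist constants C_ε > 0 and C_L > 0 such that for all s_1, …, s_L, r ∈ ℝ, |F(∑_{l=1}^L s_l + r) − ∑_{l=1}^L F(s_l)| ≤ ε |∑_{l=1}^L s_l|^{p*} + C_ε |r|^{p*} + C_L ∑_{1 ≤ l ≠ l' ≤ L} |s_l| |s_{l'}|^{p*−1}. -/

import Mathlib

open Filter intervalIntegral

/-!
Write `q = p* > 1` and `S = ∑ l, s l`. The growth bound on `f` gives
`|F b - F a| ≤ C₀ R ^ (q - 1) |b - a|` whenever `|a|, |b| ≤ R`, and the claim follows from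
`|F (S + r) - ∑ F (s l)| ≤ |F (S + r) - F S| + |F S - ∑ F (s l)|`.

* The first term is at most `C₀ (|S| + |r|) ^ (q - 1) |r|`, which is split as
  `ε |S| ^ q + C |r| ^ q` according to whether `|r| ≤ η |S|` for a small `η`
  (`add_rpow_mul_le`).
* For the second term, let `s M` be the entry of largest modulus. Then
  `|F S - F (s M)| ≤ C₀ (L |s M|) ^ (q - 1) ∑_{l ≠ M} |s l|`, and for `l ≠ M`,
  `|F (s l)| ≤ C₀ |s l| ^ q ≤ C₀ |s l| |s M| ^ (q - 1)`; only the terms of the double sum with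
  `k = M` are needed (`abs_sub_sum_le`).
-/

/-- Local Lipschitz bound for the primitive `F`. -/
lemma abs_primitive_sub_le {q C₀ : ℝ} (hq : 1 < q) {f F : ℝ → ℝ} (hf : Continuous f)
    (hC₀ : 0 < C₀) (hfb : ∀ s : ℝ, |f s| ≤ C₀ * |s| ^ (q - 1))
    (hF : ∀ s : ℝ, F s = ∫ t in (0 : ℝ)..s, f t) {a b R : ℝ} (ha : |a| ≤ R) (hb : |b| ≤ R) :
    |F b - F a| ≤ C₀ * R ^ (q - 1) * |b - a| := by
  rw [hF, hF, integral_interval_sub_left (hf.intervalIntegrable _ _)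
    (hf.intervalIntegrable _ _), ← Real.norm_eq_abs]
  refine norm_integral_le_of_norm_le_const fun x hx => (hfb x).trans ?_
  have hxR : |x| ≤ R := by
    have hx' := Set.uIoc_subset_uIcc hx
    rw [Set.mem_uIcc] at hx'
    rw [abs_le] at *
    rcases hx' with h | h <;> constructor <;> linarith
  have := Real.rpow_le_rpow (abs_nonneg x) hxR (by linarith : 0 ≤ q - 1)
  gcongr

/-- A Young-type inequality: `(w + r) ^ (q - 1) * r` is absorbed by a small multiple of `w ^ q`
and a large multiple of `r ^ q`. -/
lemma add_rpow_mul_le {q : ℝ} (hq : 1 < q) {δ : ℝ} (hδ : 0 < δ) :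
    ∃ C > 0, ∀ w r : ℝ, 0 ≤ w → 0 ≤ r → (w + r) ^ (q - 1) * r ≤ δ * w ^ q + C * r ^ q := by
  have hpow : ∀ x : ℝ, 0 ≤ x → x ^ (q - 1) * x = x ^ q := fun x hx => by
    rw [← Real.rpow_add_one' hx (by linarith), sub_add_cancel]
  have h2 : (0 : ℝ) < 2 ^ (q - 1) := by positivity
  set η : ℝ := min 1 (δ / 2 ^ (q - 1)) with hη
  have hη0 : 0 < η := lt_min one_pos (by positivity)
  have hη1 : η ≤ 1 := min_le_left _ _
  have hη2 : 2 ^ (q - 1) * η ≤ δ := by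
    have := min_le_right 1 (δ / 2 ^ (q - 1))
    rw [← hη, le_div_iff₀ h2] at this
    linarith
  refine ⟨(1 / η + 1) ^ (q - 1), by positivity, fun w r hw hr => ?_⟩
  have hq0 : 0 ≤ q - 1 := by linarith
  rcases le_total r (η * w) with h | h
  · have hrw : r ≤ w := h.trans (by nlinarith)
    calc (w + r) ^ (q - 1) * r ≤ (2 * w) ^ (q - 1) * (η * w) := by
          gcongr; linarith
      _ = 2 ^ (q - 1) * η * w ^ q := by
          rw [Real.mul_rpow (by norm_num) hw, ← hpow w hw]; ring
      _ ≤ δ * w ^ q := by gcongr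
      _ ≤ _ := le_add_of_nonneg_right (by positivity)
  · have hwr : w ≤ 1 / η * r := by
      rw [one_div, inv_mul_eq_div, le_div_iff₀ hη0]; linarith
    calc (w + r) ^ (q - 1) * r ≤ ((1 / η + 1) * r) ^ (q - 1) * r := by
          gcongr; linarith
      _ = (1 / η + 1) ^ (q - 1) * r ^ q := by
          rw [Real.mul_rpow (by positivity) hr, ← hpow r hr]; ring
      _ ≤ _ := le_add_of_nonneg_left (by positivity)

/-- The case `r = 0`: `F` is additive up to the mixed terms. -/
lemma abs_sub_sum_le {q C₀ : ℝ} (hq : 1 < q) {f F : ℝ → ℝ} (hf : Continuous f)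
    (hC₀ : 0 < C₀) (hfb : ∀ s : ℝ, |f s| ≤ C₀ * |s| ^ (q - 1))
    (hF : ∀ s : ℝ, F s = ∫ t in (0 : ℝ)..s, f t) (L : ℕ) (s : Fin L → ℝ) :
    |F (∑ l, s l) - ∑ l, F (s l)| ≤ C₀ * ((L : ℝ) ^ (q - 1) + 1) *
      ∑ l, ∑ k, if l ≠ k then |s l| * |s k| ^ (q - 1) else 0 := by
  have hF0 : F 0 = 0 := by simp [hF]
  rcases Nat.eq_zero_or_pos L with rfl | hL
  · simp [hF0]
  have hL1 : (1 : ℝ) ≤ L := by exact_mod_cast hL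
  haveI : Nonempty (Fin L) := ⟨⟨0, hL⟩⟩
  obtain ⟨M, hM⟩ := Finite.exists_max fun l => |s l|
  set A := ∑ l ∈ Finset.univ.erase M, |s l| with hA
  have hmixed : A * |s M| ^ (q - 1) ≤
      ∑ l, ∑ k, if l ≠ k then |s l| * |s k| ^ (q - 1) else 0 := by
    have hnn : ∀ l k : Fin L, 0 ≤ if l ≠ k then |s l| * |s k| ^ (q - 1) else 0 := by
      intro l k; split_ifs <;> positivity
    rw [hA, Finset.sum_mul]
    calc ∑ l ∈ Finset.univ.erase M, |s l| * |s M| ^ (q - 1)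
        ≤ ∑ l ∈ Finset.univ.erase M, ∑ k, if l ≠ k then |s l| * |s k| ^ (q - 1) else 0 := by
          refine Finset.sum_le_sum fun l hl => ?_
          have h := Finset.single_le_sum (fun k _ => hnn l k) (Finset.mem_univ M)
          rwa [if_pos (Finset.ne_of_mem_erase hl)] at h
      _ ≤ _ := Finset.sum_le_sum_of_subset_of_nonneg (Finset.erase_subset _ _)
          fun l _ _ => Finset.sum_nonneg fun k _ => hnn l k
  have hS : |∑ l, s l| ≤ L * |s M| := by
    refine (Finset.abs_sum_le_sum_abs _ _).trans ?_
    simpa using Finset.sum_le_card_nsmul Finset.univ (fun l => |s l|) _ fun l _ => hM l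
  have hmain : |F (∑ l, s l) - F (s M)| ≤ C₀ * (L * |s M|) ^ (q - 1) * A := by
    refine (abs_primitive_sub_le hq hf hC₀ hfb hF
      (le_mul_of_one_le_left (abs_nonneg _) hL1) hS).trans ?_
    gcongr
    rw [← Finset.add_sum_erase _ _ (Finset.mem_univ M), add_sub_cancel_left]
    exact Finset.abs_sum_le_sum_abs _ _
  have hrest : |∑ l ∈ Finset.univ.erase M, F (s l)| ≤ C₀ * |s M| ^ (q - 1) * A := by
    refine (Finset.abs_sum_le_sum_abs _ _).trans ?_
    rw [hA, Finset.mul_sum]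
    refine Finset.sum_le_sum fun l _ => ?_
    simpa [hF0] using abs_primitive_sub_le hq hf hC₀ hfb hF (a := 0) (by simp) (hM l)
  calc |F (∑ l, s l) - ∑ l, F (s l)|
      = |(F (∑ l, s l) - F (s M)) - ∑ l ∈ Finset.univ.erase M, F (s l)| := by
        rw [← Finset.add_sum_erase _ (fun l => F (s l)) (Finset.mem_univ M), sub_sub]
    _ ≤ C₀ * (L * |s M|) ^ (q - 1) * A + C₀ * |s M| ^ (q - 1) * A :=
        (abs_sub _ _).trans (add_le_add hmain hrest)
    _ = C₀ * ((L : ℝ) ^ (q - 1) + 1) * (A * |s M| ^ (q - 1)) := by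
        rw [Real.mul_rpow (by positivity) (abs_nonneg _)]; ring
    _ ≤ _ := by gcongr

theorem stmt_6 (m N : ℕ) (hm : 0 < m) (hmN : m < N)
    (p pstar : ℝ) (hp : 1 < p) (hpN : p < (N : ℝ) / m)
    (hps : pstar = p * N / (N - m * p))
    (f F : ℝ → ℝ) (hf : Continuous f)
    (C₀ : ℝ) (hC₀ : 0 < C₀) (hfb : ∀ s : ℝ, |f s| ≤ C₀ * |s| ^ (pstar - 1))
    (hFdef : ∀ s : ℝ, F s = ∫ t in (0 : ℝ)..s, f t) :
    ∀ L : ℕ, ∀ ε > 0, ∃ Cε > 0, ∃ CL > 0, ∀ (s : Fin L → ℝ) (r : ℝ),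
      |F (∑ l, s l + r) - ∑ l, F (s l)| ≤
        ε * |∑ l, s l| ^ pstar + Cε * |r| ^ pstar +
          CL * ∑ l, ∑ k, if l ≠ k then |s l| * |s k| ^ (pstar - 1) else 0 := by
  have hq : 1 < pstar := by
    have hm' : (0 : ℝ) < m := by exact_mod_cast hm
    have hN' : (0 : ℝ) < N := by exact_mod_cast hm.trans hmN
    rw [lt_div_iff₀ hm'] at hpN
    rw [hps, one_lt_div (by linarith)]
    nlinarith
  intro L ε hε
  obtain ⟨C, hC, hCb⟩ := add_rpow_mul_le hq (div_pos hε hC₀)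
  refine ⟨C₀ * C, by positivity, C₀ * ((L : ℝ) ^ (pstar - 1) + 1), by positivity,
    fun s r => ?_⟩
  have h1 : |F (∑ l, s l + r) - F (∑ l, s l)| ≤
      ε * |∑ l, s l| ^ pstar + C₀ * C * |r| ^ pstar := by
    have h := abs_primitive_sub_le hq hf hC₀ hfb hFdef
      (le_add_of_nonneg_right (abs_nonneg r)) (abs_add_le (∑ l, s l) r)
    rw [add_sub_cancel_left, mul_assoc] at h
    calc _ ≤ _ := h
      _ ≤ C₀ * (ε / C₀ * |∑ l, s l| ^ pstar + C * |r| ^ pstar) := by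
        gcongr; exact hCb _ _ (abs_nonneg _) (abs_nonneg _)
      _ = _ := by field_simp
  exact (abs_sub_le _ (F (∑ l, s l)) _).trans
    (add_le_add h1 (abs_sub_sum_le hq hf hC₀ hfb hFdef L s))
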